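/- Norm inflation at general initial data in H^s for gIBq (same-regularity case): let k ≥ 2 be an integer and s < 0, and let v₀, v₁ : ℝ → ℂ be measurable with ‖⟨ξ⟩^s v₀‖_{L²(ℝ)} < ∞ and ‖⟨ξ⟩^s v₁‖_{L²(ℝ)} < ∞. Then for every ε > 0 there exist T ∈ (0, ε), measurable functions w₀, w₁ ∈ L¹(ℝ) and a Fourier-side solution v of gIBq with nonlinearity u^k and data (w₀, w₁) on [0, T] such that ‖⟨ξ⟩^s (w₀ − v₀)‖_{L²(ℝ)} + ‖⟨ξ⟩^s (w₁ − v₁)‖_{L²(ℝ)} < ε and ‖⟨ξ⟩^s v(T)‖_{L²(ℝ)} > ε⁻¹. -/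

import Mathlib

open MeasureTheory Filter
open scoped ENNReal

noncomputable section

/-- The Japanese bracket weight `⟨ξ⟩^s = (1+ξ²)^(s/2)`. -/
def jbw (s ξ : ℝ) : ℝ := (1 + ξ ^ 2) ^ (s / 2)

/-- `λ(ξ) = |ξ|/⟨ξ⟩`. -/
def lam (ξ : ℝ) : ℝ := |ξ| / (1 + ξ ^ 2) ^ ((1 : ℝ) / 2)

/-- The multiplier `m(t,ξ) = sin(tλ(ξ))/λ(ξ)` for `ξ ≠ 0`, `m(t,0) = t`. -/
def mker (t ξ : ℝ) : ℝ := if ξ = 0 then t else Real.sin (t * lam ξ) / lam ξ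

/-- Fourier side linear propagator `Ŝ(t)(v₀,v₁)`. -/
def Shat (t : ℝ) (v₀ v₁ : ℝ → ℂ) (ξ : ℝ) : ℂ :=
  (Real.cos (t * lam ξ) : ℂ) * v₀ ξ + (mker t ξ : ℂ) * v₁ ξ

/-- Convolution of complex valued functions on `ℝ`. -/
def conv (f g : ℝ → ℂ) (ξ : ℝ) : ℂ := ∫ η, f η * g (ξ - η)

/-- Iterated convolution of a list of functions. -/
def convList : List (ℝ → ℂ) → ℝ → ℂ
  | [] => fun _ => 0
  | [f] => f
  | f :: g :: fs => conv f (convList (g :: fs))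

/-- Fourier side Duhamel operator `Î_k`. -/
def Ihat (k : ℕ) (w : Fin k → ℝ → ℝ → ℂ) (t ξ : ℝ) : ℂ :=
  ∫ t' in (0:ℝ)..t,
    ((Real.sin ((t - t') * lam ξ) * lam ξ : ℝ) : ℂ) * convList (List.ofFn fun i => w i t') ξ

/-- Continuity of a curve of functions with respect to the `L¹` norm, on `[0,T]`. -/
def ContinuousL1On (T : ℝ) (v : ℝ → ℝ → ℂ) : Prop :=
  ∀ t₀ ∈ Set.Icc (0 : ℝ) T,
    Tendsto (fun t => eLpNorm (fun ξ => v t ξ - v t₀ ξ) 1 volume)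
      (nhdsWithin t₀ (Set.Icc (0 : ℝ) T)) (nhds 0)

/-- Fourier-side solution of the generalized improved Boussinesq equation with
nonlinearity `u^k` and data `(v₀, v₁)` on `[0, T]`. -/
def IsGIBqSol (k : ℕ) (T : ℝ) (v₀ v₁ : ℝ → ℂ) (v : ℝ → ℝ → ℂ) : Prop :=
  (∀ t ∈ Set.Icc (0 : ℝ) T, Integrable (v t)) ∧
  ContinuousL1On T v ∧
  ∀ t ∈ Set.Icc (0 : ℝ) T,
    ∀ᵐ ξ ∂volume, v t ξ = Shat t v₀ v₁ ξ + Ihat k (fun _ => v) t ξ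

/-- Picard iterates `Ξ̂_j` for gIBq on the Fourier side. -/
def Xi (k : ℕ) (v₀ v₁ : ℝ → ℂ) : ℕ → ℝ → ℝ → ℂ
  | 0 => fun t => Shat t v₀ v₁
  | (j+1) => fun t ξ =>
      ∑ p ∈ (Finset.Nat.antidiagonalTuple k j).attach,
        Ihat k (fun i => Xi k v₀ v₁ (p.1 i)) t ξ
decreasing_by
  have hsum := Finset.Nat.mem_antidiagonalTuple.mp p.2
  have hle : p.1 i ≤ j := by
    calc p.1 i ≤ ∑ i', p.1 i' :=
          Finset.single_le_sum (fun _ _ => Nat.zero_le _) (Finset.mem_univ i)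
      _ = j := hsum
  omega

/-- The `FL^{s,p}` norm on the Fourier side: `‖⟨ξ⟩^s w‖_{L^p}`. -/
def FLnorm (s : ℝ) (p : ℝ≥0∞) (w : ℝ → ℂ) : ℝ≥0∞ :=
  eLpNorm (fun ξ => jbw s ξ * ‖w ξ‖) p volume

end



open ContinuousLinearMap (mul)

abbrev YT (T : ℝ) := C(Set.Icc (0:ℝ) T, ℂ)

noncomputable abbrev ET (T : ℝ) := Lp (YT T) 1 (volume : Measure ℝ)

/-- abstract powers -/
noncomputable def pwA {E : Type*} (B : E → E → E) (f : E) : ℕ → E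
  | 0 => f
  | (n+1) => B f (pwA B f n)

lemma pwA_norm {E : Type*} [NormedAddCommGroup E] (B : E → E → E)
    (hB : ∀ f g, ‖B f g‖ ≤ ‖f‖ * ‖g‖) (f : E) (M : ℝ) (hf : ‖f‖ ≤ M) (n : ℕ) :
    ‖pwA B f n‖ ≤ M ^ (n+1) := by
  have hM : 0 ≤ M := (norm_nonneg _).trans hf
  induction n with
  | zero => simpa [pwA] using hf
  | succ n ih =>
    calc ‖pwA B f (n+1)‖ ≤ ‖f‖ * ‖pwA B f n‖ := hB _ _
      _ ≤ M * M ^ (n+1) := by gcongr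
      _ = _ := by ring

lemma pwA_lip {E : Type*} [NormedAddCommGroup E] (B : E → E → E)
    (hB : ∀ f g, ‖B f g‖ ≤ ‖f‖ * ‖g‖)
    (hBl : ∀ f f' g, B (f - f') g = B f g - B f' g)
    (hBr : ∀ f g g', B f (g - g') = B f g - B f g')
    (f g : E) (M : ℝ) (hf : ‖f‖ ≤ M) (hg : ‖g‖ ≤ M) (n : ℕ) :
    ‖pwA B f n - pwA B g n‖ ≤ (n+1) * M ^ n * ‖f - g‖ := by
  have hM : 0 ≤ M := (norm_nonneg _).trans hf
  induction n with
  | zero => simp [pwA]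
  | succ n ih =>
    have : pwA B f (n+1) - pwA B g (n+1)
        = B (f - g) (pwA B f n) + B g (pwA B f n - pwA B g n) := by
      rw [hBl, hBr]; simp [pwA]
    rw [this]
    calc _ ≤ ‖B (f - g) (pwA B f n)‖ + ‖B g (pwA B f n - pwA B g n)‖ := norm_add_le _ _
      _ ≤ ‖f - g‖ * ‖pwA B f n‖ + ‖g‖ * ‖pwA B f n - pwA B g n‖ := by gcongr <;> apply hB
      _ ≤ ‖f - g‖ * M ^ (n+1) + M * ((n+1) * M ^ n * ‖f - g‖) := by
        gcongr
        exact pwA_norm B hB f M hf n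
      _ = _ := by push_cast; ring

lemma exists_fixed {E : Type*} [NormedAddCommGroup E] [CompleteSpace E] (a : E) (N : E → E)
    (h0 : N 0 = 0)
    (hN : ∀ f g, ‖f‖ ≤ 2 * ‖a‖ → ‖g‖ ≤ 2 * ‖a‖ → ‖N f - N g‖ ≤ 1/2 * ‖f - g‖) :
    ∃ v : E, v = a + N v ∧ ‖v‖ ≤ 2 * ‖a‖ := by
  have hmaps : Set.MapsTo (fun v => a + N v) (Metric.closedBall (0:E) (2 * ‖a‖))
      (Metric.closedBall 0 (2 * ‖a‖)) := by
    intro v hv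
    simp only [mem_closedBall_zero_iff] at hv ⊢
    have := hN v 0 hv (by simp)
    rw [h0, sub_zero, sub_zero] at this
    have := norm_add_le a (N v)
    linarith
  have hc : ContractingWith (1/2) (hmaps.restrict (fun v => a + N v) _ _) := by
    refine ⟨by norm_num, LipschitzWith.of_dist_le_mul ?_⟩
    rintro ⟨x, hx⟩ ⟨y, hy⟩
    simp only [mem_closedBall_zero_iff] at hx hy
    have := hN x y hx hy
    rw [Subtype.dist_eq, Subtype.dist_eq]
    simp only [Set.MapsTo.val_restrict_apply, dist_add_left]
    simpa [dist_eq_norm] using this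
  obtain ⟨v, hv, hfix, -⟩ := hc.exists_fixedPoint' (Metric.isClosed_closedBall.isComplete) hmaps
    (x := 0) (by simp) (edist_ne_top _ _)
  exact ⟨v, hfix.symm, by simpa using hv⟩

section conv
variable {T : ℝ}

open scoped Convolution

/-- convolution on `L¹(ℝ; C[0,T])` -/
noncomputable def convE (f g : ET T) : ET T :=
  ((L1.integrable_coeFn f).integrable_convolution (mul ℝ (YT T)) (L1.integrable_coeFn g)).toL1
    (f ⋆[mul ℝ (YT T), volume] g)

lemma convE_coe (f g : ET T) : convE f g =ᵐ[volume] (f ⋆[mul ℝ (YT T), volume] g) :=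
  Integrable.coeFn_toL1 _

lemma convE_norm (f g : ET T) : ‖convE f g‖ ≤ ‖f‖ * ‖g‖ := by
  have hf := (L1.integrable_coeFn f)
  have hg := (L1.integrable_coeFn g)
  rw [convE, L1.norm_of_fun_eq_integral_norm, L1.norm_eq_integral_norm f,
    L1.norm_eq_integral_norm g]
  have h2 := integral_convolution (mul ℝ ℝ) hf.norm hg.norm
  simp only [ContinuousLinearMap.mul_apply'] at h2
  rw [← h2]
  refine integral_mono_ae (hf.integrable_convolution _ hg).norm
    (hf.norm.integrable_convolution _ hg.norm) ?_
  filter_upwards [hf.norm.ae_convolution_exists (mul ℝ ℝ) hg.norm] with x hx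
  simp only [convolution_def, ContinuousLinearMap.mul_apply'] 
  refine norm_integral_le_of_norm_le hx (Eventually.of_forall fun t => ?_)
  exact norm_mul_le _ _

lemma convE_subl (f f' g : ET T) : convE (f - f') g = convE f g - convE f' g := by
  apply Lp.ext
  have h1 := (L1.integrable_coeFn f)
  have h2 := (L1.integrable_coeFn f')
  have h3 := (L1.integrable_coeFn g)
  have h4 : (⇑(f - f') ⋆[mul ℝ (YT T), volume] g) = ((f - f' : ℝ → YT T) ⋆[mul ℝ (YT T), volume] g) :=
    convolution_congr _ (Lp.coeFn_sub f f') (ae_eq_refl _)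
  filter_upwards [convE_coe (f-f') g, convE_coe f g, convE_coe f' g, Lp.coeFn_sub (convE f g) (convE f' g),
    h1.ae_convolution_exists (mul ℝ (YT T)) h3, h2.ae_convolution_exists (mul ℝ (YT T)) h3]
    with x e1 e2 e3 e4 e5 e6
  rw [e1, e4, h4, Pi.sub_apply, e2, e3]
  simp only [convolution_def, Pi.sub_apply, map_sub, sub_apply]
  exact integral_sub e5 e6

lemma convE_subr (f g g' : ET T) : convE f (g - g') = convE f g - convE f g' := by
  apply Lp.ext
  have h1 := (L1.integrable_coeFn g)
  have h2 := (L1.integrable_coeFn g')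
  have h3 := (L1.integrable_coeFn f)
  have h4 : (f ⋆[mul ℝ (YT T), volume] ⇑(g - g')) = (f ⋆[mul ℝ (YT T), volume] (g - g' : ℝ → YT T)) :=
    convolution_congr _ (ae_eq_refl _) (Lp.coeFn_sub g g')
  filter_upwards [convE_coe f (g-g'), convE_coe f g, convE_coe f g', Lp.coeFn_sub (convE f g) (convE f g'),
    h3.ae_convolution_exists (mul ℝ (YT T)) h1, h3.ae_convolution_exists (mul ℝ (YT T)) h2]
    with x e1 e2 e3 e4 e5 e6
  rw [e1, e4, h4, Pi.sub_apply, e2, e3]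
  simp only [convolution_def, Pi.sub_apply, map_sub]
  exact integral_sub e5 e6

lemma ae_sub_left {p : ℝ → Prop} (h : ∀ᵐ x : ℝ, p x) (ξ : ℝ) : ∀ᵐ η : ℝ, p (ξ - η) :=
  (quasiMeasurePreserving_sub_left_of_right_invariant volume ξ).tendsto_ae.eventually h

/-- identification with `convList` -/
lemma convList_eq (V : ET T) (n : ℕ) :
    ∀ᵐ ξ : ℝ, ∀ t : Set.Icc (0:ℝ) T,
      convList (List.replicate (n+1) (fun η => V η t)) ξ = pwA convE V n ξ t := by
  induction n with
  | zero => simp [pwA, convList]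
  | succ n ih =>
    have h3 := (L1.integrable_coeFn V)
    filter_upwards [convE_coe V (pwA convE V n),
      h3.ae_convolution_exists (mul ℝ (YT T)) (L1.integrable_coeFn (pwA convE V n))]
      with ξ e1 e2 t
    rw [List.replicate_succ, List.replicate_succ, convList, ← List.replicate_succ]
    simp only [pwA]
    rw [e1, convolution_def, ContinuousMap.integral_apply e2, conv]
    apply integral_congr_ae
    filter_upwards [ae_sub_left ih ξ] with η hη
    rw [hη t]
    simp

/-- The indicator bump -/
noncomputable def hb (c : ℝ) (ξ : ℝ) : ℝ := (Set.Icc (c-1) (c+1)).indicator (fun _ => 1) ξ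

lemma hb_nonneg (c ξ : ℝ) : 0 ≤ hb c ξ := Set.indicator_nonneg (by simp) _

lemma hb_int (c : ℝ) : Integrable (hb c) := by
  unfold hb
  exact (integrable_indicator_iff measurableSet_Icc).2 (by simp)

lemma hb_conv_eq (a d ξ : ℝ) : (fun η => hb a η * hb d (ξ - η)) =
    (Set.Icc (a-1) (a+1) ∩ Set.Icc (ξ-d-1) (ξ-d+1)).indicator (fun _ => (1:ℝ)) := by
  ext η
  simp only [hb, Set.indicator_apply, Set.mem_inter_iff, Set.mem_Icc]
  by_cases h : a - 1 ≤ η ∧ η ≤ a + 1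
  · by_cases h2 : d - 1 ≤ ξ - η ∧ ξ - η ≤ d + 1
    · rw [if_pos h, if_pos h2, if_pos ⟨h, by linarith, by linarith⟩]; norm_num
    · rw [if_pos h, if_neg h2, if_neg (fun h3 => h2 ⟨by linarith [h3.2.2], by linarith [h3.2.1]⟩)]
      norm_num
  · have h4 : ¬ ((a - 1 ≤ η ∧ η ≤ a + 1) ∧ ξ - d - 1 ≤ η ∧ η ≤ ξ - d + 1) := fun h3 => h h3.1
    rw [if_neg h, if_neg h4, zero_mul]

lemma hb_conv_int (a d ξ : ℝ) : Integrable (fun η => hb a η * hb d (ξ - η)) := by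
  rw [hb_conv_eq]
  refine (integrable_indicator_iff (measurableSet_Icc.inter measurableSet_Icc)).2 ?_
  rw [Set.Icc_inter_Icc]
  simp

lemma hb_conv (a d ξ : ℝ) : hb (a + d) ξ ≤ ∫ η, hb a η * hb d (ξ - η) := by
  rw [hb_conv_eq]
  rw [Set.Icc_inter_Icc, integral_indicator measurableSet_Icc]
  simp only [integral_const, smul_eq_mul, mul_one, MeasurableSet.univ, measureReal_restrict_apply,
    Set.univ_inter, Real.volume_real_Icc]
  unfold hb
  simp only [Set.indicator_apply, Set.mem_Icc]
  split_ifs with h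
  · apply le_max_of_le_left
    rcases le_total (a+1) (ξ-d+1) with h1 | h1 <;> rcases le_total (a-1) (ξ-d-1) with h2 | h2 <;>
      simp only [inf_of_le_left, inf_of_le_right, sup_of_le_left, sup_of_le_right, h1, h2] <;>
      linarith [h.1, h.2]
  · exact le_max_right _ _

open scoped ComplexOrder in
lemma conv_lower (f g : ET T) (c c' a d : ℝ) (hc : 0 ≤ c) (hc' : 0 ≤ c')
    (hf : ∀ᵐ ξ : ℝ, ∀ t, ((c * hb a ξ : ℝ) : ℂ) ≤ f ξ t)
    (hg : ∀ᵐ ξ : ℝ, ∀ t, ((c' * hb d ξ : ℝ) : ℂ) ≤ g ξ t) :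
    ∀ᵐ ξ : ℝ, ∀ t, ((c * c' * hb (a + d) ξ : ℝ) : ℂ) ≤ convE f g ξ t := by
  filter_upwards [convE_coe f g, (L1.integrable_coeFn f).ae_convolution_exists (mul ℝ (YT T))
    (L1.integrable_coeFn g)] with ξ e1 e2 t
  rw [e1, convolution_def, ContinuousMap.integral_apply e2]
  have h1 : ((c * c' * hb (a + d) ξ : ℝ) : ℂ) ≤
      ∫ η, (((c * hb a η) * (c' * hb d (ξ - η)) : ℝ) : ℂ) := by
    rw [integral_complex_ofReal]
    norm_cast
    have : (fun η => (c * hb a η) * (c' * hb d (ξ - η))) =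
      fun η => (c * c') * (hb a η * hb d (ξ - η)) := by ext; ring
    rw [this, integral_const_mul]
    exact mul_le_mul_of_nonneg_left (hb_conv a d ξ) (by positivity)
  refine h1.trans (integral_mono_ae ?_ ?_ ?_)
  · refine Integrable.ofReal (f := fun η => (c * hb a η) * (c' * hb d (ξ - η))) ?_
    have : (fun η => (c * hb a η) * (c' * hb d (ξ - η))) =
      fun η => (c * c') * (hb a η * hb d (ξ - η)) := by ext; ring
    rw [this]
    exact (hb_conv_int a d ξ).const_mul _
  · exact (ContinuousMap.evalCLM ℝ t).integrable_comp e2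
  · filter_upwards [hf, ae_sub_left hg ξ] with η h2 h3
    have h4 := h2 t
    have h5 := h3 t
    have p4 : (0:ℂ) ≤ ((c * hb a η : ℝ) : ℂ) := by
      exact_mod_cast mul_nonneg hc (hb_nonneg _ _)
    have p5 : (0:ℂ) ≤ ((c' * hb d (ξ - η) : ℝ) : ℂ) := by
      exact_mod_cast mul_nonneg hc' (hb_nonneg _ _)
    simp only [ContinuousLinearMap.mul_apply', ContinuousMap.mul_apply]
    rw [Complex.ofReal_mul]
    exact mul_le_mul h4 h5 p5 (p4.trans h4)

end conv

lemma lam_nonneg (ξ : ℝ) : 0 ≤ lam ξ := by unfold lam; positivity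

lemma lam_le_one (ξ : ℝ) : lam ξ ≤ 1 := by
  unfold lam
  rw [← Real.sqrt_eq_rpow]
  apply div_le_one_of_le₀ _ (Real.sqrt_nonneg _)
  apply Real.le_sqrt_of_sq_le
  rw [sq_abs]; linarith

lemma lam_cont : Continuous lam := by
  unfold lam
  refine continuous_abs.div ?_ ?_
  · exact Continuous.rpow_const (by fun_prop) (fun x => Or.inr (by norm_num))
  · intro x; positivity

lemma lam_ne (ξ : ℝ) (h : ξ ≠ 0) : lam ξ ≠ 0 := by
  unfold lam
  have : 0 < |ξ| := abs_pos.2 h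
  positivity

lemma lam_sq_lower (ξ : ℝ) (h : 1/2 ≤ ξ) : 1/5 ≤ lam ξ ^ 2 := by
  unfold lam
  rw [← Real.sqrt_eq_rpow, div_pow, Real.sq_sqrt (by positivity), sq_abs]
  rw [le_div_iff₀ (by positivity)]
  nlinarith

lemma mker_eq (t ξ : ℝ) : mker t ξ = t * Real.sinc (t * lam ξ) := by
  unfold mker
  split_ifs with h
  · simp [h, lam]
  · by_cases ht : t = 0
    · simp [ht]
    · rw [Real.sinc_of_ne_zero (mul_ne_zero ht (lam_ne ξ h))]
      have := lam_ne ξ h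
      field_simp

section D
variable {T : ℝ}

/-- cosine multiplier curve -/
noncomputable def cosC (T : ℝ) : C(ℝ, YT T) :=
  ContinuousMap.curry ⟨fun p : ℝ × Set.Icc (0:ℝ) T => ((Real.cos (p.2 * lam p.1) : ℝ) : ℂ), by
    have := lam_cont
    fun_prop⟩

noncomputable def mC (T : ℝ) : C(ℝ, YT T) :=
  ContinuousMap.curry ⟨fun p : ℝ × Set.Icc (0:ℝ) T => ((mker p.2 p.1 : ℝ) : ℂ), by
    have := lam_cont
    have := Real.continuous_sinc
    simp only [mker_eq]
    fun_prop⟩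

lemma cosC_apply (ξ : ℝ) (t : Set.Icc (0:ℝ) T) : cosC T ξ t = ((Real.cos (t * lam ξ) : ℝ) : ℂ) := rfl
lemma mC_apply (ξ : ℝ) (t : Set.Icc (0:ℝ) T) : mC T ξ t = ((mker t ξ : ℝ) : ℂ) := rfl

lemma cosC_norm (ξ : ℝ) : ‖cosC T ξ‖ ≤ 1 := by
  rw [ContinuousMap.norm_le _ zero_le_one]
  intro t
  rw [cosC_apply, Complex.norm_real]
  exact Real.abs_cos_le_one _

lemma mC_norm (hT : 0 ≤ T) (ξ : ℝ) : ‖mC T ξ‖ ≤ T := by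
  rw [ContinuousMap.norm_le _ hT]
  intro t
  rw [mC_apply, Complex.norm_real, mker_eq, norm_mul, Real.norm_eq_abs, Real.norm_eq_abs, abs_of_nonneg t.2.1]
  have := Real.abs_sinc_le_one (t * lam ξ)
  nlinarith [t.2.1, t.2.2, abs_nonneg (Real.sinc (t * lam ξ))]

/-- Duhamel integrand -/
noncomputable def Dint (hT : 0 ≤ T) (ξ : ℝ) (y : YT T) (t t' : ℝ) : ℂ :=
  ((Real.sin ((t - t') * lam ξ) * lam ξ : ℝ) : ℂ) * y (Set.projIcc 0 T hT t')

lemma Dint_cont (hT : 0 ≤ T) : Continuous (fun p : (((ℝ × YT T) × Set.Icc (0:ℝ) T) × ℝ) =>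
    Dint hT p.1.1.1 p.1.1.2 p.1.2 p.2) := by
  unfold Dint
  have := lam_cont
  have h2 : Continuous (Set.projIcc 0 T hT) := continuous_projIcc
  refine Continuous.mul (by fun_prop) ?_
  exact continuous_eval.comp (f := fun p : (((ℝ × YT T) × Set.Icc (0:ℝ) T) × ℝ) =>
    (p.1.1.2, Set.projIcc 0 T hT p.2)) (by fun_prop)

/-- Duhamel operator, jointly continuous -/
noncomputable def Dop (hT : 0 ≤ T) : C(ℝ × YT T, YT T) :=
  ContinuousMap.curry ⟨fun p : (ℝ × YT T) × Set.Icc (0:ℝ) T =>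
    ∫ t' in (0:ℝ)..p.2, Dint hT p.1.1 p.1.2 p.2 t', by
      exact intervalIntegral.continuous_parametric_intervalIntegral_of_continuous
        (f := fun (p : (ℝ × YT T) × Set.Icc (0:ℝ) T) t' => Dint hT p.1.1 p.1.2 p.2 t')
        (Dint_cont hT) (s := fun p => (p.2 : ℝ)) (by fun_prop)⟩

lemma Dop_apply (hT : 0 ≤ T) (ξ : ℝ) (y : YT T) (t : Set.Icc (0:ℝ) T) :
    Dop hT (ξ, y) t = ∫ t' in (0:ℝ)..t, Dint hT ξ y t t' := rfl

lemma Dint_cont' (hT : 0 ≤ T) (ξ : ℝ) (y : YT T) (t : Set.Icc (0:ℝ) T) : Continuous (Dint hT ξ y t) :=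
  (Dint_cont hT).comp (f := fun t' => (((ξ, y), t), t')) (by fun_prop)

lemma Dop_sub (hT : 0 ≤ T) (ξ : ℝ) (y z : YT T) : Dop hT (ξ, y - z) = Dop hT (ξ, y) - Dop hT (ξ, z) := by
  ext t
  rw [ContinuousMap.sub_apply, Dop_apply, Dop_apply, Dop_apply, ← intervalIntegral.integral_sub
    ((Dint_cont' hT ξ y t).intervalIntegrable _ _) ((Dint_cont' hT ξ z t).intervalIntegrable _ _)]
  congr 1
  ext t'
  simp only [Dint, ContinuousMap.sub_apply]
  ring

lemma Dop_norm (hT : 0 ≤ T) (ξ : ℝ) (y : YT T) : ‖Dop hT (ξ, y)‖ ≤ T ^ 2 * ‖y‖ := by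
  rw [ContinuousMap.norm_le _ (by positivity)]
  intro t
  rw [Dop_apply]
  have := intervalIntegral.norm_integral_le_of_norm_le_const (f := Dint hT ξ y t) (a := 0) (b := t)
    (C := T * ‖y‖) ?_
  · refine this.trans ?_
    rw [sub_zero, abs_of_nonneg t.2.1]
    have : T * ‖y‖ * t ≤ T * ‖y‖ * T := by
      gcongr
      exact t.2.2
    linarith
  · intro t' ht'
    rw [Set.uIoc_of_le t.2.1] at ht'
    unfold Dint
    rw [norm_mul, Complex.norm_real]
    gcongr
    · rw [norm_mul, Real.norm_eq_abs, Real.norm_eq_abs, abs_of_nonneg (lam_nonneg ξ)]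
      have h1 : |Real.sin ((t - t') * lam ξ)| ≤ (t - t') * lam ξ := by
        have := Real.abs_sin_le_abs (x := (t - t') * lam ξ)
        rwa [abs_of_nonneg (mul_nonneg (by linarith [ht'.2]) (lam_nonneg ξ))] at this
      have h2 := lam_nonneg ξ
      have h3 := lam_le_one ξ
      have h4 : (t - t') * lam ξ ≤ T * 1 := by
        apply mul_le_mul _ h3 h2 hT
        linarith [t.2.2, ht'.1]
      calc _ ≤ (T * 1) * 1 := by
            apply mul_le_mul (h1.trans h4) h3 h2 (by linarith)
        _ = T := by ring
    · exact y.norm_coe_le_norm _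

lemma D_integrable (hT : 0 ≤ T) {f : ℝ → YT T} (hf : Integrable f) :
    Integrable (fun ξ => Dop hT (ξ, f ξ)) := by
  refine Integrable.mono' (hf.norm.const_mul (T^2)) ?_ (Eventually.of_forall fun ξ => Dop_norm hT _ _)
  exact (Dop hT).continuous.comp_aestronglyMeasurable
    (aestronglyMeasurable_id.prodMk hf.aestronglyMeasurable)

noncomputable def DE (hT : 0 ≤ T) (f : ET T) : ET T :=
  (D_integrable hT (L1.integrable_coeFn f)).toL1 _

lemma DE_coe (hT : 0 ≤ T) (f : ET T) : DE hT f =ᵐ[volume] fun ξ => Dop hT (ξ, f ξ) :=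
  Integrable.coeFn_toL1 _

lemma DE_norm (hT : 0 ≤ T) (f : ET T) : ‖DE hT f‖ ≤ T ^ 2 * ‖f‖ := by
  rw [DE, L1.norm_of_fun_eq_integral_norm, L1.norm_eq_integral_norm, ← integral_const_mul]
  exact integral_mono (D_integrable hT (L1.integrable_coeFn f)).norm
    ((L1.integrable_coeFn f).norm.const_mul _) (fun ξ => Dop_norm hT _ _)

lemma DE_sub (hT : 0 ≤ T) (f g : ET T) : DE hT (f - g) = DE hT f - DE hT g := by
  apply Lp.ext
  filter_upwards [DE_coe hT (f - g), DE_coe hT f, DE_coe hT g, Lp.coeFn_sub f g,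
    Lp.coeFn_sub (DE hT f) (DE hT g)] with ξ e1 e2 e3 e4 e5
  rw [e1, e5, Pi.sub_apply, e2, e3, e4, Pi.sub_apply, Dop_sub]

/-- lower bound of Duhamel -/
lemma Dop_lower (hT : 0 ≤ T) (hT1 : T ≤ 1) (ξ : ℝ) (hξ : 1/2 ≤ ξ) (y : YT T) (c : ℝ) (hc : 0 ≤ c)
    (hy : ∀ t, c ≤ (y t).re) : c * (T ^ 2 / 20) ≤ ‖Dop hT (ξ, y) ⟨T, hT, le_rfl⟩‖ := by
  refine le_trans ?_ (Complex.re_le_norm _)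
  rw [Dop_apply]
  have hDI := (Dint_cont' hT ξ y ⟨T, hT, le_rfl⟩).intervalIntegrable (μ := volume) 0 T
  have h1 : (∫ t' in (0:ℝ)..T, Dint hT ξ y T t').re = ∫ t' in (0:ℝ)..T, (Dint hT ξ y T t').re :=
    (Complex.reCLM.intervalIntegral_comp_comm hDI).symm
  change _ ≤ (∫ t' in (0:ℝ)..T, Dint hT ξ y T t').re
  rw [h1]
  have h2 : ∫ t' in (0:ℝ)..T, (c / 10 * (T - t')) = c * (T^2/20) := by
    rw [intervalIntegral.integral_const_mul, intervalIntegral.integral_sub (by simp) (by simp)]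
    simp
    ring
  rw [← h2]
  refine intervalIntegral.integral_mono_on hT (Continuous.intervalIntegrable (by fun_prop) _ _)
    (Continuous.intervalIntegrable (Complex.continuous_re.comp (Dint_cont' hT ξ y ⟨T, hT, le_rfl⟩)) _ _) ?_
  intro t' ht'
  unfold Dint
  rw [Complex.re_ofReal_mul]
  have h3 := hy (Set.projIcc 0 T hT t')
  have l0 := lam_nonneg ξ
  have l1 := lam_le_one ξ
  have l2 := lam_sq_lower ξ hξ
  have d0 : 0 ≤ T - t' := by linarith [ht'.2]
  have d1 : (T - t') * lam ξ ≤ 1 := by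
    have : (T - t') * lam ξ ≤ 1 * 1 := mul_le_mul (by linarith [ht'.1]) l1 l0 zero_le_one
    linarith
  have h4 : (T - t') * lam ξ / 2 ≤ Real.sin ((T - t') * lam ξ) := by
    have a0 : 0 ≤ (T - t') * lam ξ := mul_nonneg d0 l0
    have := Real.mul_le_sin a0 (by linarith [Real.pi_gt_three])
    refine le_trans ?_ this
    have : 1/2 ≤ 2 / Real.pi := by
      rw [div_le_div_iff₀ (by norm_num) Real.pi_pos]; linarith [Real.pi_le_four]
    nlinarith
  have h5 : (T - t') / 10 ≤ Real.sin ((T - t') * lam ξ) * lam ξ := by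
    have := mul_le_mul_of_nonneg_right h4 l0
    nlinarith
  calc c / 10 * (T - t') = ((T - t') / 10) * c := by ring
    _ ≤ _ := mul_le_mul h5 h3 hc (by linarith)

end D

section sol
variable {T : ℝ}

lemma sol_of_fixed (hT : 0 ≤ T) (n : ℕ) (w₀ w₁ : ℝ → ℂ) (A V : ET T)
    (hA : ∀ᵐ ξ : ℝ, ∀ t : Set.Icc (0:ℝ) T, A ξ t = Shat t w₀ w₁ ξ)
    (hV : V = A + DE hT (pwA convE V n)) :
    IsGIBqSol (n+1) T w₀ w₁ (fun t ξ => V ξ (Set.projIcc 0 T hT t)) := by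
  have hVi := L1.integrable_coeFn V
  refine ⟨?_, ?_, ?_⟩
  · intro t ht
    exact (ContinuousMap.evalCLM ℝ (Set.projIcc 0 T hT t)).integrable_comp hVi
  · intro t₀ ht₀
    simp only [eLpNorm_one_eq_lintegral_enorm]
    have := tendsto_lintegral_filter_of_dominated_convergence
      (μ := (volume : Measure ℝ)) (l := nhdsWithin t₀ (Set.Icc (0 : ℝ) T))
      (F := fun t ξ => ‖V ξ (Set.projIcc 0 T hT t) - V ξ (Set.projIcc 0 T hT t₀)‖ₑ)
      (f := fun _ => 0) (fun ξ => ENNReal.ofReal (2 * ‖V ξ‖)) ?_ ?_ ?_ ?_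
    · simpa using this
    · refine Eventually.of_forall fun t => ?_
      have hm := Lp.stronglyMeasurable V
      have hev : ∀ u : Set.Icc (0:ℝ) T, StronglyMeasurable (fun ξ => V ξ u) := fun u =>
        (ContinuousMap.evalCLM ℝ u).continuous.comp_stronglyMeasurable hm
      exact ((hev _).sub (hev _)).enorm
    · refine Eventually.of_forall fun t => Eventually.of_forall fun ξ => ?_
      rw [← ofReal_norm]
      apply ENNReal.ofReal_le_ofReal
      have h1 := (V ξ).norm_coe_le_norm (Set.projIcc 0 T hT t)
      have h2 := (V ξ).norm_coe_le_norm (Set.projIcc 0 T hT t₀)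
      exact (norm_sub_le _ _).trans (by linarith)
    · exact (hVi.norm.const_mul 2).lintegral_lt_top.ne
    · refine Eventually.of_forall fun ξ => ?_
      have hc : Continuous fun t => ‖V ξ (Set.projIcc 0 T hT t) - V ξ (Set.projIcc 0 T hT t₀)‖ₑ := by
        have h2 : Continuous (Set.projIcc 0 T hT) := continuous_projIcc
        exact (((V ξ).continuous.comp h2).sub continuous_const).enorm
      have := (hc.tendsto t₀).mono_left (nhdsWithin_le_nhds (s := Set.Icc (0 : ℝ) T))
      simpa using this
  · intro t ht
    have h1 := Lp.coeFn_add A (DE hT (pwA convE V n))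
    rw [← hV] at h1
    filter_upwards [h1, hA, DE_coe hT (pwA convE V n), convList_eq V n] with ξ e1 e2 e3 e4
    rw [e1, Pi.add_apply, e3, ContinuousMap.add_apply, e2, Set.projIcc_of_mem hT ht]
    congr 1
    rw [Dop_apply, Ihat]
    apply intervalIntegral.integral_congr
    intro t' ht'
    simp only [List.ofFn_const, e4, Dint]

lemma lin_integrable (hT : 0 ≤ T) {w₀ w₁ : ℝ → ℂ} (h0 : Integrable w₀) (h1 : Integrable w₁) :
    Integrable (fun ξ => w₀ ξ • cosC T ξ + w₁ ξ • mC T ξ) ∧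
    (∫ ξ, ‖w₀ ξ • cosC T ξ + w₁ ξ • mC T ξ‖) ≤ (∫ ξ, ‖w₀ ξ‖) + T * ∫ ξ, ‖w₁ ξ‖ := by
  have hle : ∀ ξ, ‖w₀ ξ • cosC T ξ + w₁ ξ • mC T ξ‖ ≤ ‖w₀ ξ‖ + T * ‖w₁ ξ‖ := by
    intro ξ
    refine (norm_add_le _ _).trans ?_
    rw [norm_smul, norm_smul]
    have a := cosC_norm (T := T) ξ
    have b := mC_norm hT ξ
    nlinarith [norm_nonneg (w₀ ξ), norm_nonneg (w₁ ξ)]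
  have hi : Integrable (fun ξ => ‖w₀ ξ‖ + T * ‖w₁ ξ‖) := h0.norm.add (h1.norm.const_mul T)
  have hI : Integrable (fun ξ => w₀ ξ • cosC T ξ + w₁ ξ • mC T ξ) := by
    refine Integrable.mono' hi ?_ (Eventually.of_forall hle)
    exact (h0.aestronglyMeasurable.smul (cosC T).continuous.aestronglyMeasurable).add
      (h1.aestronglyMeasurable.smul (mC T).continuous.aestronglyMeasurable)
  refine ⟨hI, ?_⟩
  rw [← integral_const_mul, ← integral_add h0.norm (h1.norm.const_mul T)]
  exact integral_mono hI.norm hi hle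

noncomputable def linE (hT : 0 ≤ T) {w₀ w₁ : ℝ → ℂ} (h0 : Integrable w₀) (h1 : Integrable w₁) : ET T :=
  (lin_integrable hT h0 h1).1.toL1 _

lemma linE_norm (hT : 0 ≤ T) {w₀ w₁ : ℝ → ℂ} (h0 : Integrable w₀) (h1 : Integrable w₁) :
    ‖linE hT h0 h1‖ ≤ (∫ ξ, ‖w₀ ξ‖) + T * ∫ ξ, ‖w₁ ξ‖ := by
  rw [linE, L1.norm_of_fun_eq_integral_norm]
  exact (lin_integrable hT h0 h1).2

lemma linE_coe (hT : 0 ≤ T) {w₀ w₁ : ℝ → ℂ} (h0 : Integrable w₀) (h1 : Integrable w₁) :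
    ∀ᵐ ξ : ℝ, ∀ t : Set.Icc (0:ℝ) T, linE hT h0 h1 ξ t = Shat t w₀ w₁ ξ := by
  have := (lin_integrable hT h0 h1).1.coeFn_toL1
  filter_upwards [this] with ξ e t
  rw [linE, e, Shat]
  simp only [ContinuousMap.add_apply, ContinuousMap.smul_apply, cosC_apply, mC_apply, smul_eq_mul]
  ring

lemma hb_integral (c : ℝ) : ∫ ξ, hb c ξ = 2 := by
  unfold hb
  rw [integral_indicator measurableSet_Icc]
  simp
  norm_num

/-- the perturbation -/
noncomputable def phi (n : ℕ) (N R ξ : ℝ) : ℂ := ((R * (hb N ξ + hb (-(n * N)) ξ) : ℝ) : ℂ)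

lemma phi_int (n : ℕ) (N R : ℝ) : Integrable (phi n N R) := by
  unfold phi
  exact (((hb_int N).add (hb_int (-(n*N)))).const_mul R).ofReal

lemma phi_norm (n : ℕ) (N R ξ : ℝ) (hR : 0 ≤ R) : ‖phi n N R ξ‖ = R * (hb N ξ + hb (-(n * N)) ξ) := by
  unfold phi
  rw [Complex.norm_real, Real.norm_of_nonneg]
  have := hb_nonneg N ξ
  have := hb_nonneg (-(n*N)) ξ
  positivity

lemma phi_integral (n : ℕ) (N R : ℝ) (hR : 0 ≤ R) : ∫ ξ, ‖phi n N R ξ‖ = 4 * R := by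
  simp_rw [phi_norm n N R _ hR]
  rw [integral_const_mul, integral_add (hb_int _) (hb_int _), hb_integral, hb_integral]
  ring

lemma phi_zero (n : ℕ) (hn : 1 ≤ n) (N R ξ : ℝ) (hN : 3 ≤ N) (hξ : |ξ| < N - 1) : phi n N R ξ = 0 := by
  have hn' : (1:ℝ) ≤ n := by exact_mod_cast hn
  rw [abs_lt] at hξ
  unfold phi hb
  rw [Set.indicator_of_notMem, Set.indicator_of_notMem]
  · simp
  · rintro ⟨h1, h2⟩
    nlinarith
  · rintro ⟨h1, h2⟩
    linarith

open scoped ComplexOrder in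
lemma F_lower (hT1 : T ≤ 1) (n : ℕ) (N R : ℝ) (hR : 0 ≤ R) (F : ET T)
    (hF : ∀ᵐ ξ : ℝ, ∀ t : Set.Icc (0:ℝ) T, F ξ t = Shat t (phi n N R) 0 ξ) :
    (∀ᵐ ξ : ℝ, ∀ t, ((R/2 * hb N ξ : ℝ) : ℂ) ≤ F ξ t) ∧
    (∀ᵐ ξ : ℝ, ∀ t, ((R/2 * hb (-(n * N)) ξ : ℝ) : ℂ) ≤ F ξ t) := by
  have key : ∀ ξ, ∀ t : Set.Icc (0:ℝ) T, 1/2 ≤ Real.cos (t * lam ξ) := by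
    intro ξ t
    have h1 := Real.one_sub_sq_div_two_le_cos (x := t * lam ξ)
    have l0 := lam_nonneg ξ
    have l1 := lam_le_one ξ
    have h2 : t * lam ξ ≤ 1 * 1 := mul_le_mul (t.2.2.trans hT1) l1 l0 zero_le_one
    have h3 : 0 ≤ t * lam ξ := mul_nonneg t.2.1 l0
    nlinarith
  constructor <;>
  · filter_upwards [hF] with ξ e t
    rw [e t, Shat, phi]
    simp only [Pi.zero_apply, mul_zero, add_zero]
    rw [← Complex.ofReal_mul]
    norm_cast
    have a := hb_nonneg N ξ
    have b := hb_nonneg (-(n*N)) ξ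
    have c := key ξ t
    have : 0 ≤ R * (hb N ξ + hb (-(n*N)) ξ) := by positivity
    have d := mul_le_mul_of_nonneg_right c this
    nlinarith [mul_nonneg hR a, mul_nonneg hR b]

open scoped ComplexOrder in
lemma pw_lower (hT1 : T ≤ 1) (n : ℕ) (hn : 1 ≤ n) (N R : ℝ) (hR : 0 ≤ R) (F : ET T)
    (hF : ∀ᵐ ξ : ℝ, ∀ t : Set.Icc (0:ℝ) T, F ξ t = Shat t (phi n N R) 0 ξ) :
    ∀ᵐ ξ : ℝ, ∀ t, (R/2) ^ (n+1) * hb 0 ξ ≤ (pwA convE F n ξ t).re := by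
  obtain ⟨h1, h2⟩ := F_lower hT1 n N R hR F hF
  have step : ∀ m : ℕ, ∀ᵐ ξ : ℝ, ∀ t,
      (((R/2) ^ (m+1) * hb ((m+1) * N) ξ : ℝ) : ℂ) ≤ pwA convE F m ξ t := by
    intro m
    induction m with
    | zero => simpa [pwA] using h1
    | succ m ih =>
      have := conv_lower F (pwA convE F m) (R/2) ((R/2)^(m+1)) N ((m+1)*N) (by positivity)
        (by positivity) h1 ih
      have e1 : R/2 * (R/2)^(m+1) = (R/2)^(m+1+1) := by ring
      have e2 : N + (m+1) * N = ((m+1 : ℕ) + 1) * N := by push_cast; ring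
      rw [e1, e2] at this
      exact this
  obtain ⟨m, rfl⟩ : ∃ m, n = m + 1 := ⟨n - 1, by omega⟩
  have := conv_lower F (pwA convE F m) (R/2) ((R/2)^(m+1)) _ ((m+1)*N) (by positivity)
        (by positivity) h2 (step m)
  have e1 : R/2 * (R/2)^(m+1) = (R/2)^(m+1+1) := by ring
  have e2 : -(((m+1 : ℕ) : ℝ) * N) + (m+1) * N = 0 := by push_cast; ring
  rw [e1, e2] at this
  filter_upwards [this] with ξ h t
  have h3 := (Complex.le_def.1 (h t)).1
  rwa [Complex.ofReal_re] at h3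

end sol

lemma core (n : ℕ) (hn : 1 ≤ n) (ψ₀ ψ₁ : ℝ → ℂ) (h0 : Integrable ψ₀) (h1 : Integrable ψ₁) :
    ∃ c C X : ℝ, 0 < c ∧ 1 ≤ X ∧ ∀ x : ℝ, X ≤ x → ∀ N : ℝ, 3 ≤ N →
      ∃ v, IsGIBqSol (n+1) (Real.sqrt (1 / x ^ (2*n+1))) (fun ξ => ψ₀ ξ + phi n N (x^2) ξ) ψ₁ v ∧
        c * x - C ≤ ∫ ξ in Set.Icc (1/2:ℝ) 1, ‖v (Real.sqrt (1 / x ^ (2*n+1))) ξ‖ := by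
  set K : ℝ := (∫ ξ, ‖ψ₀ ξ‖) + ∫ ξ, ‖ψ₁ ξ‖ with hK
  have i0 : 0 ≤ ∫ ξ, ‖ψ₀ ξ‖ := integral_nonneg fun _ => norm_nonneg _
  have i1 : 0 ≤ ∫ ξ, ‖ψ₁ ξ‖ := integral_nonneg fun _ => norm_nonneg _
  have hK0 : 0 ≤ K := add_nonneg i0 i1
  set L : ℝ := (n+1) * 10 ^ n with hL
  have hL0 : 0 < L := by positivity
  refine ⟨1 / (40 * 2^(n+1)), L * (K + 10^(n+1)) + K, 1 + K + 2 * L, by positivity, by linarith, ?_⟩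
  intro x hx N hN
  have hx1 : 1 ≤ x := by linarith
  have hx0 : 0 < x := by linarith
  set T := Real.sqrt (1 / x ^ (2*n+1)) with hTdef
  have hT : 0 ≤ T := Real.sqrt_nonneg _
  have hT2 : T ^ 2 = 1 / x ^ (2*n+1) := Real.sq_sqrt (by positivity)
  have hT1 : T ≤ 1 := by
    rw [hTdef, Real.sqrt_le_iff]
    refine ⟨zero_le_one, ?_⟩
    rw [one_pow]
    rw [div_le_one (by positivity)]
    exact one_le_pow₀ hx1
  set R := x ^ 2 with hR
  have hR0 : 0 ≤ R := by positivity
  have hRK : K ≤ R := by nlinarith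
  have e1 : T ^ 2 * R ^ n = 1 / x := by
    rw [hT2, hR]; field_simp; ring
  have e2 : T ^ 2 * R ^ (n+1) = x := by
    rw [pow_succ R, ← mul_assoc, e1, hR]; field_simp
  have hφ := phi_int n N R
  set F : ET T := linE hT hφ (integrable_zero ℝ ℂ volume) with hF
  set G : ET T := linE hT h0 h1 with hG
  have hFc := linE_coe hT hφ (integrable_zero ℝ ℂ volume)
  have hGc := linE_coe hT h0 h1
  rw [← hF] at hFc
  rw [← hG] at hGc
  have hFn : ‖F‖ ≤ 4 * R := by
    have := linE_norm hT hφ (integrable_zero ℝ ℂ volume)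
    simpa [phi_integral n N R hR0] using this
  have hGn : ‖G‖ ≤ K := by
    have := linE_norm hT h0 h1
    rw [← hG] at this
    nlinarith
  have hAn : ‖F + G‖ ≤ 5 * R := (norm_add_le _ _).trans (by linarith)
  have hlip : ∀ f g : ET T, ‖f‖ ≤ 10 * R → ‖g‖ ≤ 10 * R →
      ‖DE hT (pwA convE f n) - DE hT (pwA convE g n)‖ ≤ L / x * ‖f - g‖ := by
    intro f g hf hg
    rw [← DE_sub]
    refine (DE_norm hT _).trans ?_
    calc _ ≤ T^2 * ((n+1) * (10 * R) ^ n * ‖f - g‖) := by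
          gcongr
          exact pwA_lip convE convE_norm convE_subl convE_subr f g _ hf hg n
      _ = (T^2 * R^n) * L * ‖f - g‖ := by rw [hL, mul_pow]; ring
      _ = _ := by rw [e1]; ring
  have hLx : L / x ≤ 1 / 2 := by
    rw [div_le_div_iff₀ hx0 (by norm_num)]; linarith
  have hpw0 : DE hT (pwA convE (0 : ET T) n) = 0 := by
    rw [← norm_le_zero_iff]
    refine (DE_norm hT _).trans ?_
    have := pwA_norm convE convE_norm (0 : ET T) 0 (by simp) n
    rw [zero_pow (by omega)] at this
    have : ‖pwA convE (0 : ET T) n‖ = 0 := le_antisymm this (norm_nonneg _)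
    rw [this, mul_zero]
  obtain ⟨V, hV, hVn⟩ := exists_fixed (F + G) (fun V => DE hT (pwA convE V n)) hpw0 (by
    intro f g hf hg
    refine (hlip f g (by linarith) (by linarith)).trans ?_
    gcongr)
  have hVn' : ‖V‖ ≤ 10 * R := by linarith
  refine ⟨_, sol_of_fixed hT n _ ψ₁ (F + G) V ?_ hV, ?_⟩
  · filter_upwards [hFc, hGc, Lp.coeFn_add F G] with ξ a b c t
    rw [c, Pi.add_apply, ContinuousMap.add_apply, a, b]
    simp only [Shat, Pi.zero_apply]
    ring
  have hVF : ‖V - F‖ ≤ K + 10^(n+1) * x := by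
    have : V - F = G + DE hT (pwA convE V n) := by
      nth_rewrite 1 [hV]; abel
    rw [this]
    refine (norm_add_le _ _).trans (add_le_add hGn ?_)
    refine (DE_norm hT _).trans ?_
    calc _ ≤ T^2 * (10 * R)^(n+1) := by
          gcongr
          exact pwA_norm convE convE_norm V _ hVn' n
      _ = 10^(n+1) * (T^2 * R^(n+1)) := by rw [mul_pow]; ring
      _ = _ := by rw [e2]
  set H : ET T := DE hT (pwA convE V n) - DE hT (pwA convE F n) with hH
  have hHn : ‖H‖ ≤ L * (K + 10^(n+1)) := by
    refine (hlip V F hVn' (by linarith)).trans ?_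
    calc _ ≤ L / x * (K + 10^(n+1) * x) := by gcongr
      _ ≤ L / x * ((K + 10^(n+1)) * x) := by
        gcongr
        nlinarith
      _ = _ := by field_simp
  set c' : ℝ := (R/2)^(n+1) * (T^2/20) with hc'
  have hc'e : c' = x / (20 * 2^(n+1)) := by
    have : c' = (T^2 * R^(n+1)) / (20 * 2^(n+1)) := by rw [hc', div_pow]; ring
    rw [this, e2]
  have hpt : ∀ᵐ ξ : ℝ, ξ ∈ Set.Icc (1/2:ℝ) 1 →
      c' - ‖H ξ‖ - ‖G ξ‖ ≤ ‖V ξ (Set.projIcc 0 T hT T)‖ := by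
    have q1 := Lp.coeFn_add (F + G) (DE hT (pwA convE V n))
    have q0 := hV
    rw [← q0] at q1
    filter_upwards [hFc, q1, Lp.coeFn_add F G, DE_coe hT (pwA convE F n),
      Lp.coeFn_sub (DE hT (pwA convE V n)) (DE hT (pwA convE F n)),
      pw_lower hT1 n hn N R hR0 F hFc] with ξ a1 a2 a3 a4 a5 a6 hξ
    have hb0 : hb 0 ξ = 1 := by
      unfold hb
      rw [Set.indicator_of_mem]
      exact ⟨by linarith [hξ.1], by linarith [hξ.2]⟩
    rw [hb0, mul_one] at a6
    have low := Dop_lower hT hT1 ξ hξ.1 (pwA convE F n ξ) _ (by positivity) a6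
    rw [← a4, ← hc'] at low
    have hp : Set.projIcc 0 T hT T = ⟨T, hT, le_rfl⟩ := Set.projIcc_right hT
    rw [hp]
    set τ : Set.Icc (0:ℝ) T := ⟨T, hT, le_rfl⟩ with hτ
    have hF0 : F ξ τ = 0 := by
      rw [a1 τ, Shat, phi_zero n hn N R ξ hN]
      · simp
      · rw [abs_of_nonneg (by linarith [hξ.1])]; linarith [hξ.2]
    have hVeq : V ξ τ = G ξ τ + (DE hT (pwA convE F n) ξ τ + H ξ τ) := by
      rw [a5, a2]
      simp only [Pi.add_apply, a3, ContinuousMap.add_apply, hF0, Pi.sub_apply, ContinuousMap.sub_apply]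
      ring
    have n1 := (G ξ).norm_coe_le_norm τ
    have n2 := (H ξ).norm_coe_le_norm τ
    have n3 : DE hT (pwA convE F n) ξ τ = V ξ τ - G ξ τ - H ξ τ := by rw [hVeq]; ring
    have n4 : ‖DE hT (pwA convE F n) ξ τ‖ ≤ ‖V ξ τ‖ + ‖G ξ τ‖ + ‖H ξ τ‖ := by
      rw [n3]
      exact (norm_sub_le _ _).trans (add_le_add (norm_sub_le _ _) le_rfl)
    linarith
  have Hi := (L1.integrable_coeFn H).norm
  have Gi := (L1.integrable_coeFn G).norm
  have Vi : Integrable (fun ξ => ‖V ξ (Set.projIcc 0 T hT T)‖) :=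
    ((ContinuousMap.evalCLM ℝ (Set.projIcc 0 T hT T)).integrable_comp (L1.integrable_coeFn V)).norm
  have hcI : IntegrableOn (fun _ : ℝ => c') (Set.Icc (1/2:ℝ) 1) := by simp
  have hmono := setIntegral_mono_on_ae (s := Set.Icc (1/2:ℝ) 1)
    ((hcI.sub Hi.integrableOn).sub Gi.integrableOn) Vi.integrableOn measurableSet_Icc hpt
  refine le_trans ?_ hmono
  have hs1 : ∫ ξ in Set.Icc (1/2:ℝ) 1, (c' - ‖H ξ‖ - ‖G ξ‖) =
      c' / 2 - (∫ ξ in Set.Icc (1/2:ℝ) 1, ‖H ξ‖) - ∫ ξ in Set.Icc (1/2:ℝ) 1, ‖G ξ‖ := by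
    have r1 := integral_sub (hcI.sub Hi.integrableOn) Gi.integrableOn
    have r2 := integral_sub hcI Hi.integrableOn
    have r3 : ∫ ξ in Set.Icc (1/2:ℝ) 1, c' = c' / 2 := by
      rw [setIntegral_const, Real.volume_real_Icc]
      norm_num
      ring
    simp only [Pi.sub_apply] at r1
    rw [r1, r2, r3]
  have t1 := setIntegral_le_integral (s := Set.Icc (1/2:ℝ) 1) Hi (Eventually.of_forall fun _ => norm_nonneg _)
  have t2 := setIntegral_le_integral (s := Set.Icc (1/2:ℝ) 1) Gi (Eventually.of_forall fun _ => norm_nonneg _)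
  rw [← L1.norm_eq_integral_norm] at t1 t2
  have hs2 : 1 / (40 * 2^(n+1)) * x = c' / 2 := by rw [hc'e]; field_simp; norm_num
  change _ ≤ ∫ ξ in Set.Icc (1/2:ℝ) 1, (c' - ‖H ξ‖ - ‖G ξ‖)
  rw [hs1, hs2]
  linarith

lemma jbw_pos (s ξ : ℝ) : 0 < jbw s ξ := by unfold jbw; positivity

lemma jbw_cont (s : ℝ) : Continuous (jbw s) := by
  unfold jbw
  exact Continuous.rpow_const (by fun_prop) (fun x => Or.inl (by positivity))

lemma jbw_anti (s : ℝ) (hs : s < 0) (a ξ : ℝ) (h : a ^ 2 ≤ ξ ^ 2) : jbw s ξ ≤ jbw s a := by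
  unfold jbw
  exact Real.rpow_le_rpow_of_nonpos (by positivity) (by linarith) (by linarith)

lemma FLnorm_eq (s : ℝ) (w : ℝ → ℂ) :
    FLnorm s 2 w = eLpNorm (fun ξ => (jbw s ξ : ℂ) * w ξ) 2 volume := by
  unfold FLnorm
  refine eLpNorm_congr_norm_ae (Eventually.of_forall fun ξ => ?_)
  simp

lemma FL_approx (s : ℝ) (v : ℝ → ℂ) (hm : Measurable v) (hv : FLnorm s 2 v < ⊤) (δ : ℝ≥0∞) (hδ : δ ≠ 0) :
    ∃ ψ : ℝ → ℂ, Integrable ψ ∧ FLnorm s 2 (fun ξ => ψ ξ - v ξ) ≤ δ := by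
  rw [FLnorm_eq] at hv
  have hj : Continuous fun ξ => (jbw s ξ : ℂ) := Complex.continuous_ofReal.comp (jbw_cont s)
  have hmem : MemLp (fun ξ => (jbw s ξ : ℂ) * v ξ) 2 volume :=
    ⟨(hj.measurable.mul hm).aestronglyMeasurable, hv⟩
  obtain ⟨g, hgs, hg, hgc, -⟩ := hmem.exists_hasCompactSupport_eLpNorm_sub_le (by norm_num) hδ
  have hne : ∀ ξ, (jbw s ξ : ℂ) ≠ 0 := fun ξ => by exact_mod_cast (jbw_pos s ξ).ne'
  refine ⟨fun ξ => (jbw s ξ : ℂ)⁻¹ * g ξ, ?_, ?_⟩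
  · exact ((hj.inv₀ hne).mul hgc).integrable_of_hasCompactSupport hgs.mul_left
  · rw [FLnorm_eq]
    refine le_trans (le_of_eq ?_) hg
    refine eLpNorm_congr_norm_ae (Eventually.of_forall fun ξ => ?_)
    simp only [Pi.sub_apply]
    rw [mul_sub, mul_inv_cancel_left₀ (hne ξ), norm_sub_rev]

lemma FLnorm_add (s : ℝ) (f g : ℝ → ℂ) (hf : AEStronglyMeasurable f) (hg : AEStronglyMeasurable g) :
    FLnorm s 2 (fun ξ => f ξ + g ξ) ≤ FLnorm s 2 f + FLnorm s 2 g := by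
  have hj : Continuous fun ξ => (jbw s ξ : ℂ) := Complex.continuous_ofReal.comp (jbw_cont s)
  rw [FLnorm_eq, FLnorm_eq, FLnorm_eq]
  simp only [mul_add]
  exact eLpNorm_add_le (hj.aestronglyMeasurable.mul hf) (hj.aestronglyMeasurable.mul hg) (by norm_num)

lemma hb_eLp (c : ℝ) : eLpNorm (hb c) 2 volume ≤ 2 := by
  unfold hb
  rw [eLpNorm_indicator_const measurableSet_Icc (by norm_num) (by norm_num)]
  rw [Real.volume_Icc]
  have : c + 1 - (c - 1) = 2 := by ring
  rw [this]
  simp only [enorm_one, one_mul, ENNReal.ofReal_ofNat]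
  calc (2:ℝ≥0∞) ^ (1 / (2:ℝ≥0∞).toReal) ≤ 2 ^ (1:ℝ) := by
        apply ENNReal.rpow_le_rpow_of_exponent_le (by norm_num)
        norm_num
    _ = 2 := by simp

lemma FL_phi (s : ℝ) (hs : s < 0) (n : ℕ) (hn : 1 ≤ n) (N R : ℝ) (hN : 3 ≤ N) (hR : 0 ≤ R) :
    FLnorm s 2 (phi n N R) ≤ ENNReal.ofReal (jbw s (N-1) * R) * 4 := by
  unfold FLnorm
  have h1 : eLpNorm (fun ξ => jbw s ξ * ‖phi n N R ξ‖) 2 volume ≤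
      eLpNorm (fun ξ => (jbw s (N-1) * R) • (hb N ξ + hb (-(n*N)) ξ)) 2 volume := by
    apply eLpNorm_mono_real
    intro ξ
    rw [Real.norm_of_nonneg (mul_nonneg (jbw_pos s ξ).le (norm_nonneg _)), smul_eq_mul]
    have a := hb_nonneg N ξ
    have b := hb_nonneg (-(n*N)) ξ
    have c := (jbw_pos s (N-1)).le
    by_cases h : |ξ| < N - 1
    · rw [phi_zero n hn N R ξ hN h]
      simp
      positivity
    · rw [phi_norm n N R ξ hR, mul_assoc]
      gcongr
      apply jbw_anti s hs
      rw [← sq_abs ξ]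
      push Not at h
      exact pow_le_pow_left₀ (by linarith) h 2
  refine h1.trans ?_
  have h2 := eLpNorm_const_smul (jbw s (N-1) * R) (fun ξ => hb N ξ + hb (-(n*N)) ξ) 2 volume
  change eLpNorm (fun ξ => (jbw s (N-1) * R) • (hb N ξ + hb (-(n*N)) ξ)) 2 volume = _ at h2
  rw [h2, Real.enorm_of_nonneg (mul_nonneg (jbw_pos s _).le hR)]
  gcongr
  refine (eLpNorm_add_le (hb_int N).aestronglyMeasurable (hb_int _).aestronglyMeasurable
    (by norm_num)).trans ?_
  refine (add_le_add (hb_eLp N) (hb_eLp _)).trans ?_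
  norm_num

lemma FL_lower (s : ℝ) (hs : s < 0) (v : ℝ → ℂ) (hv : Integrable v) :
    ENNReal.ofReal (jbw s 1 * ∫ ξ in Set.Icc (1/2:ℝ) 1, ‖v ξ‖) ≤ FLnorm s 2 v := by
  have hj : Continuous fun ξ => (jbw s ξ : ℂ) := Complex.continuous_ofReal.comp (jbw_cont s)
  rw [FLnorm_eq]
  set f : ℝ → ℂ := fun ξ => (jbw s ξ : ℂ) * v ξ with hf
  set μ : Measure ℝ := volume.restrict (Set.Icc (1/2:ℝ) 1) with hμ
  have hfm : AEStronglyMeasurable f volume := hj.aestronglyMeasurable.mul hv.aestronglyMeasurable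
  have h1 : eLpNorm f 1 μ ≤ eLpNorm f 2 μ := by
    refine (eLpNorm_le_eLpNorm_mul_rpow_measure_univ (p := 1) (q := 2) (by norm_num) hfm.restrict).trans ?_
    refine mul_le_of_le_one_right (by simp) ?_
    apply ENNReal.rpow_le_one
    · rw [Measure.restrict_apply_univ, Real.volume_Icc]
      rw [ENNReal.ofReal_le_one]
      norm_num
    · norm_num
  refine le_trans ?_ (h1.trans (eLpNorm_mono_measure f Measure.restrict_le_self))
  rw [eLpNorm_one_eq_lintegral_enorm, ← integral_const_mul,
    ofReal_integral_eq_lintegral_ofReal (hv.norm.integrableOn.const_mul _)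
      (Eventually.of_forall fun ξ => mul_nonneg (jbw_pos s 1).le (norm_nonneg _))]
  refine setLIntegral_mono' measurableSet_Icc ?_
  intro ξ hξ
  rw [← ofReal_norm]
  apply ENNReal.ofReal_le_ofReal
  rw [hf, norm_mul, Complex.norm_real, Real.norm_of_nonneg (jbw_pos s ξ).le]
  gcongr
  apply jbw_anti s hs
  nlinarith [hξ.1, hξ.2]

lemma jbw_tendsto (s : ℝ) (hs : s < 0) : Tendsto (fun N : ℝ => jbw s (N - 1)) atTop (nhds 0) := by
  unfold jbw
  have h := tendsto_rpow_neg_atTop (y := -(s/2)) (by linarith)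
  rw [neg_neg] at h
  refine h.comp ?_
  refine tendsto_atTop_mono' atTop ?_ tendsto_id
  filter_upwards [eventually_ge_atTop 2] with N hN
  simp only [id]
  nlinarith

/-- Norm inflation at general initial data in `H^s` for the generalized improved
Boussinesq equation (same-regularity case). -/
theorem norm_inflation_Hs
    (k : ℕ) (hk : 2 ≤ k) (s : ℝ) (hs : s < 0)
    (v₀ v₁ : ℝ → ℂ) (hv₀m : Measurable v₀) (hv₁m : Measurable v₁)
    (hv₀ : FLnorm s 2 v₀ < ⊤) (hv₁ : FLnorm s 2 v₁ < ⊤) :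
    ∀ ε : ℝ, 0 < ε →
      ∃ T : ℝ, T ∈ Set.Ioo 0 ε ∧
        ∃ w₀ w₁ : ℝ → ℂ, Integrable w₀ ∧ Integrable w₁ ∧
          ∃ v : ℝ → ℝ → ℂ, IsGIBqSol k T w₀ w₁ v ∧
            FLnorm s 2 (fun ξ => w₀ ξ - v₀ ξ) + FLnorm s 2 (fun ξ => w₁ ξ - v₁ ξ)
                < ENNReal.ofReal ε ∧
            ENNReal.ofReal ε⁻¹ < FLnorm s 2 (v T) := by
  intro ε hε
  obtain ⟨n, rfl⟩ : ∃ n, k = n + 1 := ⟨k - 1, by omega⟩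
  have hn : 1 ≤ n := by omega
  have hδ : ENNReal.ofReal (ε/4) ≠ 0 := by
    rw [Ne, ENNReal.ofReal_eq_zero]; push Not; linarith
  obtain ⟨ψ₀, hψ₀, hψ₀'⟩ := FL_approx s v₀ hv₀m hv₀ _ hδ
  obtain ⟨ψ₁, hψ₁, hψ₁'⟩ := FL_approx s v₁ hv₁m hv₁ _ hδ
  obtain ⟨c, C, X, hc, hX, hcore⟩ := core n hn ψ₀ ψ₁ hψ₀ hψ₁
  have hj := jbw_pos s 1
  obtain ⟨x, hx1, hx2, hx3⟩ : ∃ x : ℝ, X ≤ x ∧ 1 / ε ^ 2 < x ∧ ε⁻¹ < jbw s 1 * (c * x - C) := by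
    refine ⟨max X (max (1/ε^2 + 1) ((C + ε⁻¹ / jbw s 1 + 1) / c)), le_max_left _ _, ?_, ?_⟩
    · exact lt_of_lt_of_le (by linarith) ((le_max_left _ _).trans (le_max_right _ _))
    · have h1 : (C + ε⁻¹ / jbw s 1 + 1) / c ≤
          max X (max (1/ε^2 + 1) ((C + ε⁻¹ / jbw s 1 + 1) / c)) :=
        (le_max_right _ _).trans (le_max_right _ _)
      set x := max X (max (1/ε^2 + 1) ((C + ε⁻¹ / jbw s 1 + 1) / c))
      rw [div_le_iff₀ hc] at h1
      have h2 : ε⁻¹ / jbw s 1 < c * x - C := by linarith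
      rw [div_lt_iff₀ hj] at h2
      linarith
  have hx0 : 1 ≤ x := hX.trans hx1
  obtain ⟨N, hN, hN2⟩ : ∃ N : ℝ, 3 ≤ N ∧ jbw s (N - 1) < ε / (32 * x ^ 2) := by
    have h := (jbw_tendsto s hs).eventually (gt_mem_nhds (show (0:ℝ) < ε / (32 * x ^ 2) by positivity))
    exact ((eventually_ge_atTop 3).and h).exists
  obtain ⟨v, hv, hvl⟩ := hcore x hx1 N hN
  set T := Real.sqrt (1 / x ^ (2*n+1)) with hT
  have hT0 : 0 < T := Real.sqrt_pos.2 (by positivity)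
  have hTε : T < ε := by
    rw [hT, Real.sqrt_lt' hε, div_lt_iff₀ (by positivity)]
    rw [div_lt_iff₀ (by positivity)] at hx2
    have : x ≤ x ^ (2*n+1) := le_self_pow₀ hx0 (by omega)
    nlinarith [sq_nonneg ε]
  refine ⟨T, ⟨hT0, hTε⟩, fun ξ => ψ₀ ξ + phi n N (x^2) ξ, ψ₁, hψ₀.add (phi_int _ _ _), hψ₁, v, hv, ?_, ?_⟩
  · have e : (fun ξ => ψ₀ ξ + phi n N (x^2) ξ - v₀ ξ) =
        fun ξ => (ψ₀ ξ - v₀ ξ) + phi n N (x^2) ξ := by ext; ring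
    rw [e]
    have a1 := FLnorm_add s (fun ξ => ψ₀ ξ - v₀ ξ) (phi n N (x^2))
      (hψ₀.aestronglyMeasurable.sub hv₀m.aestronglyMeasurable) (phi_int _ _ _).aestronglyMeasurable
    have a2 := FL_phi s hs n hn N (x^2) hN (by positivity)
    have a3 : ENNReal.ofReal (jbw s (N-1) * x^2) * 4 ≤ ENNReal.ofReal (ε/8) := by
      rw [show (4:ℝ≥0∞) = ENNReal.ofReal 4 by simp, ← ENNReal.ofReal_mul (by
        have := jbw_pos s (N-1); positivity)]
      apply ENNReal.ofReal_le_ofReal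
      rw [lt_div_iff₀ (by positivity)] at hN2
      linarith
    calc _ ≤ (ENNReal.ofReal (ε/4) + ENNReal.ofReal (ε/8)) + ENNReal.ofReal (ε/4) :=
          add_le_add (a1.trans (add_le_add hψ₀' (a2.trans a3))) hψ₁'
      _ = ENNReal.ofReal (ε/4 + ε/8 + ε/4) := by
          rw [ENNReal.ofReal_add (by positivity) (by positivity),
            ENNReal.ofReal_add (by positivity) (by positivity)]
      _ < ENNReal.ofReal ε := (ENNReal.ofReal_lt_ofReal_iff hε).2 (by linarith)
  · have hvi := hv.1 T ⟨hT0.le, le_rfl⟩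
    refine lt_of_lt_of_le ?_ (FL_lower s hs (v T) hvi)
    have hlt : ε⁻¹ < jbw s 1 * ∫ ξ in Set.Icc (1/2:ℝ) 1, ‖v T ξ‖ :=
      hx3.trans_le (mul_le_mul_of_nonneg_left hvl hj.le)
    exact (ENNReal.ofReal_lt_ofReal_iff ((inv_pos.2 hε).trans hlt)).2 hlt
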